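/- Fix 0 < q < 1, 0 < a < q^{−1}, b < q^{−1}, c ∈ ℝ ∖ {0}, θ ∈ (0, π), and α ∈ ℝ with √(aq) < α < 1/√(aq), |α a c q| < 1 and |α b q/c| < 1; assume moreover (aq;q)_k ≠ 0, (αacq;q)_k ≠ 0 and (αbq/c;q)_k ≠ 0 for all 0 ≤ k ≤ n. Then the series ∑_{k=0}^{∞} (α^k (aq)^{k/2}/(q;q)_k)·p_n(q^k; a, b; q)·Q_k(cos θ; c√(aq), (b/c)√(q/a) | q) converges absolutely, and its sum equals (α^n (aq)^{n/2} (αacq^{n+1};q)_∞ (αbq^{n+1}/c;q)_∞)/((aq;q)_n (α√(aq) e^{iθ};q)_∞ (α√(aq) e^{−iθ};q)_∞) · p_n(cos θ; α√(aq), c√(aq), (b/c)√(q/a), √(aq)/α | q), where p_n(·;·,·,·,·|q) denotes the Askey–Wilson polynomial. -/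

import Mathlib

/-- q-shifted factorial `(a;q)_k = ∏_{j=0}^{k-1} (1 - a q^j)`. -/
noncomputable def qPoch (q a : ℝ) (k : ℕ) : ℝ := ∏ j ∈ Finset.range k, (1 - a * q ^ j)

/-- Infinite q-shifted factorial `(a;q)_∞ = ∏_{j=0}^{∞} (1 - a q^j)`. -/
noncomputable def qPochInf (q a : ℝ) : ℝ := ∏' j : ℕ, (1 - a * q ^ j)

/-- Complex q-shifted infinite factorial `(a;q)_∞ = ∏_{j=0}^{∞} (1 - a q^j)`. -/
noncomputable def qPochInfC (q a : ℂ) : ℂ := ∏' j : ℕ, (1 - a * q ^ j)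

/-- Little q-Jacobi polynomial
`p_n(x;a,b;q) = ∑_{k=0}^{n} ((q^{−n};q)_k (abq^{n+1};q)_k)/((aq;q)_k (q;q)_k) (qx)^k`. -/
noncomputable def littleqJacobi (q a b : ℝ) (n : ℕ) (x : ℝ) : ℝ :=
  ∑ k ∈ Finset.range (n + 1),
    qPoch q (q ^ (-(n : ℤ))) k * qPoch q (a * b * q ^ (n + 1)) k /
      (qPoch q (a * q) k * qPoch q q k) * (q * x) ^ k

/-- Al-Salam–Chihara polynomials, defined by `Q_0 = 1`, `Q_1 = 2x − (c+d)` and the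
recurrence `2x Q_k = Q_{k+1} + (c+d)q^k Q_k + (1−q^k)(1−cdq^{k−1}) Q_{k−1}`. -/
noncomputable def alSalamChihara (q c d x : ℝ) : ℕ → ℝ
  | 0 => 1
  | 1 => 2 * x - (c + d)
  | (k + 2) => (2 * x - (c + d) * q ^ (k + 1)) * alSalamChihara q c d x (k + 1)
      - (1 - q ^ (k + 1)) * (1 - c * d * q ^ k) * alSalamChihara q c d x k

/-- Askey–Wilson polynomial for `x = cos θ`:
`p_n(x;A,B,C,D|q) = A^{−n}(AB;q)_n(AC;q)_n(AD;q)_n ∑_{k=0}^{n}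
((q^{−n};q)_k (ABCDq^{n−1};q)_k q^k)/((AB;q)_k (AC;q)_k (AD;q)_k (q;q)_k)
∏_{j=0}^{k−1}(1 − 2Aq^j x + A²q^{2j})`. -/
noncomputable def askeyWilson (q : ℝ) (n : ℕ) (A B C D x : ℝ) : ℝ :=
  A ^ (-(n : ℤ)) * qPoch q (A * B) n * qPoch q (A * C) n * qPoch q (A * D) n *
    ∑ k ∈ Finset.range (n + 1),
      qPoch q (q ^ (-(n : ℤ))) k * qPoch q (A * B * C * D * q ^ ((n : ℤ) - 1)) k * q ^ k /
          (qPoch q (A * B) k * qPoch q (A * C) k * qPoch q (A * D) k * qPoch q q k) *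
        ∏ j ∈ Finset.range k, (1 - 2 * A * q ^ j * x + A ^ 2 * q ^ (2 * j))

/-!
Since `p_n(q^k; a, b; q)` is a polynomial in `q^k`, the transform of `α^k p_n(q^k; a, b; q)` is a
finite combination of values `G(A q^j)` of the Al-Salam–Chihara generating function
`G(t) = ∑ Q_k t^k / (q;q)_k` at `A = α √(aq)`. The three-term recurrence becomes the
`q`-difference equation `(1 - 2xt + t²) G(t) = (1 - ct)(1 - dt) G(qt)`. Iterated `j` times it
expresses `G(A q^j)` through `G(A)`, which turns the finite combination into `G(A)` times the sum
defining the Askey–Wilson polynomial; iterated infinitely often, with `G(0) = 1`, it evaluates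
`G(A)` as a quotient of infinite products.
-/

open Filter Topology Finset

/-! ### Poincaré recurrences -/

section Poincare

variable {R : Type*} [NormedCommRing R]

/-- The unperturbed step `(p, s) = (ζ + η, ζ * η)` acts triangularly on `(v - η * u, u)`, with
diagonal entries `ζ` and `η`; the small weight `κ` on `u` makes it a contraction, with room for a
perturbation of size `δ`. -/
theorem norm_sub_mul_add_mul_norm_le {ζ η p s u v : R} {ρ κ δ : ℝ} (hζ : ‖ζ‖ ≤ ρ) (hη : ‖η‖ ≤ ρ)
    (hκ : 0 ≤ κ) (hp : ‖p - (ζ + η)‖ ≤ δ) (hs : ‖s - ζ * η‖ ≤ δ) (hδ : δ ≤ κ)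
    (hδκ : δ * (ρ + 1) ≤ κ * κ) :
    ‖p * v - s * u - η * v‖ + κ * ‖v‖ ≤ (ρ + 2 * κ) * (‖v - η * u‖ + κ * ‖u‖) := by
  set z := v - η * u with hz
  have hδ0 : 0 ≤ δ := (norm_nonneg _).trans hp
  have hv : ‖v‖ ≤ ‖z‖ + ρ * ‖u‖ := by
    calc ‖v‖ = ‖z + η * u‖ := by rw [hz, sub_add_cancel]
      _ ≤ ‖z‖ + ‖η‖ * ‖u‖ := norm_add_le_of_le le_rfl (norm_mul_le _ _)
      _ ≤ ‖z‖ + ρ * ‖u‖ := by gcongr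
  calc ‖p * v - s * u - η * v‖ + κ * ‖v‖
      = ‖ζ * z + (p - (ζ + η)) * v - (s - ζ * η) * u‖ + κ * ‖v‖ := by rw [hz]; ring_nf
    _ ≤ ‖ζ‖ * ‖z‖ + ‖p - (ζ + η)‖ * ‖v‖ + ‖s - ζ * η‖ * ‖u‖ + κ * ‖v‖ := by
        gcongr
        exact norm_sub_le_of_le (norm_add_le_of_le (norm_mul_le _ _) (norm_mul_le _ _))
          (norm_mul_le _ _)
    _ ≤ ρ * ‖z‖ + δ * (‖z‖ + ρ * ‖u‖) + δ * ‖u‖ + κ * (‖z‖ + ρ * ‖u‖) := by gcongr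
    _ = (ρ + δ + κ) * ‖z‖ + (κ * ρ + δ * (ρ + 1)) * ‖u‖ := by ring
    _ ≤ (ρ + κ + κ) * ‖z‖ + (κ * ρ + (κ * κ + κ * κ)) * ‖u‖ := by
        gcongr
        exact hδκ.trans (le_add_of_nonneg_left (mul_nonneg hκ hκ))
    _ = (ρ + 2 * κ) * (‖z‖ + κ * ‖u‖) := by ring

theorem summable_norm_of_tendsto_recurrence {u p s : ℕ → R} {ζ η : R} (hζ : ‖ζ‖ < 1)
    (hη : ‖η‖ < 1) (hp : Tendsto p atTop (𝓝 (ζ + η))) (hs : Tendsto s atTop (𝓝 (ζ * η)))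
    (hu : ∀ k, u (k + 2) = p k * u (k + 1) - s k * u k) : Summable fun k ↦ ‖u k‖ := by
  obtain ⟨ρ, hρ, hρ1⟩ := exists_between (max_lt hζ hη)
  obtain ⟨hζρ, hηρ⟩ := max_lt_iff.mp hρ
  have hρ0 : 0 < ρ := (norm_nonneg ζ).trans_lt hζρ
  obtain ⟨κ, hκ, hκ1⟩ : ∃ κ > 0, ρ + 2 * κ < 1 := ⟨(1 - ρ) / 3, by linarith, by linarith⟩
  obtain ⟨δ, hδ, hδκ, hδκκ⟩ : ∃ δ > 0, δ ≤ κ ∧ δ * (ρ + 1) ≤ κ * κ := by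
    refine ⟨κ * κ / (κ + (ρ + 1)), by positivity, ?_, ?_⟩
    · rw [div_le_iff₀ (by positivity)]; nlinarith
    · rw [div_mul_eq_mul_div, div_le_iff₀ (by positivity)]; nlinarith [mul_pos hκ hκ]
  have hsummable : Summable fun k ↦ ‖u (k + 1) - η * u k‖ + κ * ‖u k‖ := by
    refine summable_of_ratio_norm_eventually_le hκ1 ?_
    filter_upwards [(tendsto_iff_norm_sub_tendsto_zero.mp hp).eventually_le_const hδ,
      (tendsto_iff_norm_sub_tendsto_zero.mp hs).eventually_le_const hδ] with k hpk hsk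
    rw [Real.norm_of_nonneg (by positivity), Real.norm_of_nonneg (by positivity), hu]
    exact norm_sub_mul_add_mul_norm_le hζρ.le hηρ.le hκ.le hpk hsk hδκ hδκκ
  refine (hsummable.mul_left κ⁻¹).of_nonneg_of_le (fun _ ↦ norm_nonneg _) fun k ↦ ?_
  rw [← div_eq_inv_mul, le_div_iff₀' hκ]
  exact le_add_of_nonneg_left (norm_nonneg _)

end Poincare

/-! ### `q`-shifted factorials -/

theorem qPoch_zero (q a : ℝ) : qPoch q a 0 = 1 := prod_range_zero _

theorem qPoch_succ (q a : ℝ) (k : ℕ) : qPoch q a (k + 1) = qPoch q a k * (1 - a * q ^ k) :=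
  prod_range_succ _ _

theorem qPoch_ne_zero_of_le {q a : ℝ} {k n : ℕ} (hn : qPoch q a n ≠ 0) (hk : k ≤ n) :
    qPoch q a k ≠ 0 :=
  ne_zero_of_dvd_ne_zero hn (prod_dvd_prod_of_subset _ _ _ (range_mono hk))

theorem one_sub_pow_succ_ne_zero {q : ℝ} (hq : |q| < 1) (k : ℕ) : 1 - q ^ (k + 1) ≠ 0 := by
  intro h
  have : |q| ^ (k + 1) < 1 := pow_lt_one₀ (abs_nonneg q) hq k.succ_ne_zero
  rw [← abs_pow, ← sub_eq_zero.mp h, abs_one] at this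
  exact this.false

theorem qPoch_self_ne_zero {q : ℝ} (hq : |q| < 1) (k : ℕ) : qPoch q q k ≠ 0 :=
  prod_ne_zero_iff.mpr fun j _ ↦ by simpa only [pow_succ'] using one_sub_pow_succ_ne_zero hq j

section InfiniteProduct

variable {𝕜 : Type*} [NormedField 𝕜] {q : 𝕜}

theorem summable_norm_neg_mul_pow (hq : ‖q‖ < 1) (a : 𝕜) :
    Summable fun j : ℕ ↦ ‖-(a * q ^ j)‖ := by
  simpa only [norm_neg, norm_mul] using (summable_norm_geometric_of_norm_lt_one hq).mul_left ‖a‖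

theorem multipliable_one_sub_mul_pow [CompleteSpace 𝕜] (hq : ‖q‖ < 1) (a : 𝕜) :
    Multipliable fun j : ℕ ↦ 1 - a * q ^ j := by
  simpa only [sub_eq_add_neg] using
    multipliable_one_add_of_summable (summable_norm_neg_mul_pow hq a)

end InfiniteProduct

theorem qPochInfC_ne_zero {q a : ℂ} (hq : ‖q‖ < 1) (ha : ‖a‖ < 1) : qPochInfC q a ≠ 0 := by
  simp only [qPochInfC, sub_eq_add_neg]
  refine tprod_one_add_ne_zero_of_summable (fun j h ↦ ?_) (summable_norm_neg_mul_pow hq a)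
  have hlt : ‖a * q ^ j‖ < 1 := by
    rw [norm_mul, norm_pow]
    exact mul_lt_one_of_nonneg_of_lt_one_left (norm_nonneg a) ha
      (pow_le_one₀ (norm_nonneg q) hq.le)
  rw [← sub_eq_zero.mp ((sub_eq_add_neg _ _).trans h), norm_one] at hlt
  exact hlt.false

theorem qPoch_mul_qPochInf {q : ℝ} (hq : |q| < 1) (a : ℝ) (n : ℕ) :
    qPoch q a n * qPochInf q (a * q ^ n) = qPochInf q a := by
  have hshift (j : ℕ) : 1 - a * q ^ n * q ^ j = 1 - a * q ^ (j + n) := by ring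
  have hmul : Multipliable fun j ↦ 1 - a * q ^ (j + n) := by
    simpa only [hshift] using multipliable_one_sub_mul_pow hq (a * q ^ n)
  simp only [qPochInf, qPoch, hshift]
  exact hmul.prod_mul_tprod_nat_mul'

/-! ### The generating function of the Al-Salam–Chihara polynomials -/

/-- The normalized Al-Salam–Chihara polynomial `Q_k(x; c, d | q) / (q;q)_k`, the coefficient of
`t^k` in the generating function. -/
noncomputable def alSalamChiharaCoeff (q c d x : ℝ) (k : ℕ) : ℝ :=
  alSalamChihara q c d x k / qPoch q q k

/-- The Al-Salam–Chihara generating function `∑ Q_k(x; c, d | q) t^k / (q;q)_k`; its value is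
meaningful only where the series converges. -/
noncomputable def alSalamChiharaGen (q c d x t : ℝ) : ℝ :=
  ∑' k, alSalamChiharaCoeff q c d x k * t ^ k

section GeneratingFunction

variable {q c d x t : ℝ}

theorem alSalamChiharaCoeff_zero (q c d x : ℝ) : alSalamChiharaCoeff q c d x 0 = 1 := by
  simp only [alSalamChiharaCoeff, alSalamChihara, qPoch_zero, div_one]

theorem one_sub_mul_alSalamChiharaCoeff_one (hq : |q| < 1) (c d x : ℝ) :
    (1 - q) * alSalamChiharaCoeff q c d x 1 = 2 * x - (c + d) := by
  have : 1 - q ≠ 0 := by simpa using one_sub_pow_succ_ne_zero hq 0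
  simp only [alSalamChiharaCoeff, alSalamChihara, qPoch_succ, qPoch_zero, one_mul, pow_zero,
    mul_one]
  field_simp

theorem one_sub_pow_mul_alSalamChiharaCoeff_add_two (hq : |q| < 1) (c d x : ℝ) (k : ℕ) :
    (1 - q ^ (k + 2)) * alSalamChiharaCoeff q c d x (k + 2) =
      (2 * x - (c + d) * q ^ (k + 1)) * alSalamChiharaCoeff q c d x (k + 1)
        - (1 - c * d * q ^ k) * alSalamChiharaCoeff q c d x k := by
  have h0 := qPoch_self_ne_zero hq k
  have h1 := one_sub_pow_succ_ne_zero hq k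
  have h2 := one_sub_pow_succ_ne_zero hq (k + 1)
  simp only [alSalamChiharaCoeff, alSalamChihara, qPoch_succ, ← pow_succ']
  field_simp

theorem summable_abs_alSalamChiharaCoeff_mul_pow {ζ η : ℂ} (hq : |q| < 1) (hadd : ζ + η = 2 * x)
    (hmul : ζ * η = 1) (hζ : ‖t * ζ‖ < 1) (hη : ‖t * η‖ < 1) (c d : ℝ) :
    Summable fun k ↦ |alSalamChiharaCoeff q c d x k * t ^ k| := by
  have hpow (m : ℕ) : Tendsto (fun k ↦ q ^ (k + m)) atTop (𝓝 0) :=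
    (tendsto_pow_atTop_nhds_zero_of_abs_lt_one hq).comp (tendsto_add_atTop_nat m)
  have hp : Tendsto (fun k ↦ t * (2 * x - (c + d) * q ^ (k + 1)) / (1 - q ^ (k + 2))) atTop
      (𝓝 (t * (2 * x))) := by
    simpa [Pi.div_def] using ((((hpow 1).const_mul (c + d)).const_sub (2 * x)).const_mul t).div
      ((hpow 2).const_sub 1) (by norm_num)
  have hs : Tendsto (fun k ↦ t ^ 2 * (1 - c * d * q ^ k) / (1 - q ^ (k + 2))) atTop
      (𝓝 (t ^ 2)) := by
    simpa [Pi.div_def] using ((((hpow 0).const_mul (c * d)).const_sub 1).const_mul (t ^ 2)).div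
      ((hpow 2).const_sub 1) (by norm_num)
  have hp_roots : ((t * (2 * x) : ℝ) : ℂ) = t * ζ + t * η := by
    push_cast; linear_combination -(t : ℂ) * hadd
  have hs_roots : ((t ^ 2 : ℝ) : ℂ) = t * ζ * (t * η) := by
    push_cast; linear_combination -(t : ℂ) ^ 2 * hmul
  have hsummable := summable_norm_of_tendsto_recurrence
    (u := fun k ↦ ((alSalamChiharaCoeff q c d x k * t ^ k : ℝ) : ℂ)) hζ hη
    (hp_roots ▸ (Complex.continuous_ofReal.tendsto _).comp hp)
    (hs_roots ▸ (Complex.continuous_ofReal.tendsto _).comp hs) fun k ↦ ?_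
  · simpa only [Complex.norm_real, Real.norm_eq_abs] using hsummable
  · have hrec := one_sub_pow_mul_alSalamChiharaCoeff_add_two hq c d x k
    have hne : 1 - q ^ (k + 2) ≠ 0 := one_sub_pow_succ_ne_zero hq (k + 1)
    simp only [Function.comp_apply]
    norm_cast
    field_simp
    linear_combination t ^ (k + 2) * hrec

theorem summable_alSalamChiharaCoeff_mul_pow_of_abs_le {r : ℝ}
    (ht : Summable fun k ↦ alSalamChiharaCoeff q c d x k * t ^ k) (hr : |r| ≤ |t|) :
    Summable fun k ↦ alSalamChiharaCoeff q c d x k * r ^ k := by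
  refine .of_norm_bounded ht.norm fun k ↦ ?_
  simp only [norm_mul, norm_pow, Real.norm_eq_abs]
  gcongr

theorem abs_mul_pow_le_self (hq : |q| < 1) (t : ℝ) (N : ℕ) : |t * q ^ N| ≤ |t| := by
  rw [abs_mul, abs_pow]
  exact mul_le_of_le_one_right (abs_nonneg t) (pow_le_one₀ (abs_nonneg q) hq.le)

theorem one_sub_add_sq_mul_alSalamChiharaGen (hq : |q| < 1)
    (ht : Summable fun k ↦ alSalamChiharaCoeff q c d x k * t ^ k) :
    (1 - 2 * t * x + t ^ 2) * alSalamChiharaGen q c d x t =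
      (1 - t * c) * (1 - t * d) * alSalamChiharaGen q c d x (t * q) := by
  set u := alSalamChiharaCoeff q c d x
  have htq : Summable fun k ↦ u k * (t * q) ^ k :=
    summable_alSalamChiharaCoeff_mul_pow_of_abs_le ht (by simpa using abs_mul_pow_le_self hq t 1)
  have hG : HasSum (fun k ↦ u k * t ^ k) (alSalamChiharaGen q c d x t) := ht.hasSum
  have hGq : HasSum (fun k ↦ u k * (t * q) ^ k) (alSalamChiharaGen q c d x (t * q)) := htq.hasSum
  have hlhs := ((hasSum_nat_add_iff' 2).mpr hG).sub ((hasSum_nat_add_iff' 2).mpr hGq)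
  have hrhs := (((((hasSum_nat_add_iff' 1).mpr hG).mul_left (2 * x * t)).sub
    (((hasSum_nat_add_iff' 1).mpr hGq).mul_left ((c + d) * t))).sub
      (hG.mul_left (t ^ 2))).add (hGq.mul_left (c * d * t ^ 2))
  have hterm (k : ℕ) : u (k + 2) * t ^ (k + 2) - u (k + 2) * (t * q) ^ (k + 2) =
      2 * x * t * (u (k + 1) * t ^ (k + 1)) - (c + d) * t * (u (k + 1) * (t * q) ^ (k + 1))
        - t ^ 2 * (u k * t ^ k) + c * d * t ^ 2 * (u k * (t * q) ^ k) := by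
    have hrec := one_sub_pow_mul_alSalamChiharaCoeff_add_two hq c d x k
    simp only [mul_pow]
    linear_combination t ^ (k + 2) * hrec
  have hsums := hlhs.unique (hrhs.congr_fun hterm)
  have hu0 : u 0 = 1 := alSalamChiharaCoeff_zero q c d x
  simp only [sum_range_succ, sum_range_zero, hu0] at hsums
  linear_combination hsums + t * one_sub_mul_alSalamChiharaCoeff_one hq c d x

theorem prod_mul_alSalamChiharaGen (hq : |q| < 1)
    (ht : Summable fun k ↦ alSalamChiharaCoeff q c d x k * t ^ k) (N : ℕ) :
    (∏ j ∈ range N, (1 - 2 * t * q ^ j * x + t ^ 2 * q ^ (2 * j))) * alSalamChiharaGen q c d x t =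
      qPoch q (t * c) N * qPoch q (t * d) N * alSalamChiharaGen q c d x (t * q ^ N) := by
  induction N with
  | zero => simp [qPoch_zero]
  | succ N ih =>
    have hstep := one_sub_add_sq_mul_alSalamChiharaGen hq
      (summable_alSalamChiharaCoeff_mul_pow_of_abs_le ht (abs_mul_pow_le_self hq t N))
    rw [prod_range_succ, qPoch_succ, qPoch_succ, pow_succ q N, ← mul_assoc t]
    linear_combination (1 - 2 * t * q ^ N * x + t ^ 2 * q ^ (2 * N)) * ih +
      qPoch q (t * c) N * qPoch q (t * d) N * hstep

theorem tendsto_alSalamChiharaGen_mul_pow (hq : |q| < 1)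
    (ht : Summable fun k ↦ alSalamChiharaCoeff q c d x k * t ^ k) :
    Tendsto (fun N ↦ alSalamChiharaGen q c d x (t * q ^ N)) atTop (𝓝 1) := by
  have hzero : ∑' k, alSalamChiharaCoeff q c d x k * (0 : ℝ) ^ k = 1 := by
    rw [tsum_eq_single 0 fun k hk ↦ by rw [zero_pow hk, mul_zero], pow_zero, mul_one,
      alSalamChiharaCoeff_zero]
  rw [← hzero]
  refine tendsto_tsum_of_dominated_convergence ht.norm (fun k ↦ ?_) (.of_forall fun N k ↦ ?_)
  · have hlim := (tendsto_pow_atTop_nhds_zero_of_abs_lt_one hq).const_mul t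
    rw [mul_zero] at hlim
    exact (hlim.pow k).const_mul _
  · rw [norm_mul, norm_mul, norm_pow _ k, norm_pow _ k, Real.norm_eq_abs (t * q ^ N)]
    gcongr
    exact abs_mul_pow_le_self hq t N

theorem qPochInfC_mul_alSalamChiharaGen {ζ η : ℂ} (hq : |q| < 1) (hadd : ζ + η = 2 * x)
    (hmul : ζ * η = 1) (ht : Summable fun k ↦ alSalamChiharaCoeff q c d x k * t ^ k) :
    qPochInfC q (t * ζ) * qPochInfC q (t * η) * (alSalamChiharaGen q c d x t : ℂ) =
      ((qPochInf q (t * c) * qPochInf q (t * d) : ℝ) : ℂ) := by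
  have hqC : ‖(q : ℂ)‖ < 1 := by rwa [Complex.norm_real]
  have hlhs := (((multipliable_one_sub_mul_pow hqC (t * ζ)).tendsto_prod_tprod_nat).mul
    (multipliable_one_sub_mul_pow hqC (t * η)).tendsto_prod_tprod_nat).mul_const
      (alSalamChiharaGen q c d x t : ℂ)
  have hrhs := (Complex.continuous_ofReal.tendsto _).comp
    ((((multipliable_one_sub_mul_pow hq (t * c)).tendsto_prod_tprod_nat).mul
      (multipliable_one_sub_mul_pow hq (t * d)).tendsto_prod_tprod_nat).mul
        (tendsto_alSalamChiharaGen_mul_pow hq ht))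
  rw [mul_one] at hrhs
  refine tendsto_nhds_unique hlhs (hrhs.congr fun N ↦ ?_)
  have hfactor (j : ℕ) : ((1 - 2 * t * q ^ j * x + t ^ 2 * q ^ (2 * j) : ℝ) : ℂ) =
      (1 - t * ζ * q ^ j) * (1 - t * η * q ^ j) := by
    push_cast
    linear_combination (t : ℂ) * q ^ j * hadd - (t : ℂ) ^ 2 * q ^ (2 * j) * hmul
  rw [Function.comp_apply]
  change ((qPoch q (t * c) N * qPoch q (t * d) N * _ : ℝ) : ℂ) = _
  rw [← prod_mul_alSalamChiharaGen hq ht, Complex.ofReal_mul, Complex.ofReal_prod,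
    ← prod_mul_distrib]
  simp only [hfactor]

end GeneratingFunction

/-! ### The transform of a little `q`-Jacobi polynomial -/

section Transform

variable {q : ℝ}

theorem hasSum_littleqJacobi_mul_alSalamChihara {c d x t : ℝ} (hq : |q| < 1)
    (ht : Summable fun k ↦ alSalamChiharaCoeff q c d x k * t ^ k) (a b : ℝ) (n : ℕ) :
    HasSum (fun k ↦ t ^ k / qPoch q q k * littleqJacobi q a b n (q ^ k) * alSalamChihara q c d x k)
      (∑ j ∈ range (n + 1), qPoch q (q ^ (-(n : ℤ))) j * qPoch q (a * b * q ^ (n + 1)) j /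
        (qPoch q (a * q) j * qPoch q q j) * q ^ j * alSalamChiharaGen q c d x (t * q ^ j)) := by
  have hgen (j : ℕ) : HasSum (fun k ↦ alSalamChiharaCoeff q c d x k * (t * q ^ j) ^ k)
      (alSalamChiharaGen q c d x (t * q ^ j)) :=
    (summable_alSalamChiharaCoeff_mul_pow_of_abs_le ht (abs_mul_pow_le_self hq t j)).hasSum
  refine (hasSum_sum fun j _ ↦ (hgen j).mul_left _).congr_fun fun k ↦ ?_
  rw [littleqJacobi, mul_sum, sum_mul]
  refine sum_congr rfl fun j _ ↦ ?_
  rw [alSalamChiharaCoeff, mul_pow, mul_pow, pow_right_comm q j k]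
  ring

theorem sum_mul_alSalamChiharaGen_eq_askeyWilson {n : ℕ} {A C D E x : ℝ} (hq0 : q ≠ 0)
    (hq : |q| < 1) (hA : A ≠ 0) (hAC : qPoch q (A * C) n ≠ 0) (hAD : qPoch q (A * D) n ≠ 0)
    (hAE : qPoch q (A * E) n ≠ 0)
    (hsum : Summable fun k ↦ alSalamChiharaCoeff q C D x k * A ^ k) :
    ∑ j ∈ range (n + 1), qPoch q (q ^ (-(n : ℤ))) j *
        qPoch q (A * E / q * (C * D / q) * q ^ (n + 1)) j /
        (qPoch q (A * E / q * q) j * qPoch q q j) * q ^ j *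
        alSalamChiharaGen q C D x (A * q ^ j) =
      A ^ n * alSalamChiharaGen q C D x A /
        (qPoch q (A * C) n * qPoch q (A * D) n * qPoch q (A * E) n) *
        askeyWilson q n A C D E x := by
  have hparam : A * E / q * (C * D / q) * q ^ (n + 1) = A * C * D * E * q ^ ((n : ℤ) - 1) := by
    rw [zpow_sub_one₀ hq0, zpow_natCast]
    field_simp
    ring
  rw [hparam, div_mul_cancel₀ _ hq0, askeyWilson, zpow_neg A, zpow_natCast, ← mul_assoc,
    mul_sum (range (n + 1))]
  refine sum_congr rfl fun j hj ↦ ?_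
  have hjn : j ≤ n := mem_range_succ_iff.mp hj
  have hACj := qPoch_ne_zero_of_le hAC hjn
  have hADj := qPoch_ne_zero_of_le hAD hjn
  have hgen : alSalamChiharaGen q C D x (A * q ^ j) =
      (∏ i ∈ range j, (1 - 2 * A * q ^ i * x + A ^ 2 * q ^ (2 * i))) *
        alSalamChiharaGen q C D x A / (qPoch q (A * C) j * qPoch q (A * D) j) :=
    (eq_div_iff (mul_ne_zero hACj hADj)).mpr
      (by rw [prod_mul_alSalamChiharaGen hq hsum, mul_comm])
  rw [hgen]
  generalize ∏ i ∈ range j, (1 - 2 * A * q ^ i * x + A ^ 2 * q ^ (2 * i)) = P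
  field_simp

/-- The transform in the parameters `A, C, D, E` of the Askey–Wilson polynomial, where the little
`q`-Jacobi parameters are `a = A E / q` and `b = C D / q`, and `ζ`, `η` stand for `e^{±iθ}`. -/
theorem hasSum_littleqJacobi_mul_alSalamChihara_eq_askeyWilson {n : ℕ} {A C D E x : ℝ}
    {ζ η : ℂ} (hq0 : q ≠ 0) (hq : |q| < 1) (hA : A ≠ 0) (hadd : ζ + η = 2 * x) (hmul : ζ * η = 1)
    (hζ : ‖A * ζ‖ < 1) (hη : ‖A * η‖ < 1) (hAC : qPoch q (A * C) n ≠ 0)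
    (hAD : qPoch q (A * D) n ≠ 0) (hAE : qPoch q (A * E) n ≠ 0) :
    HasSum (fun k ↦ ((A ^ k / qPoch q q k * littleqJacobi q (A * E / q) (C * D / q) n (q ^ k) *
        alSalamChihara q C D x k : ℝ) : ℂ))
      (((A ^ n * qPochInf q (A * C * q ^ n) * qPochInf q (A * D * q ^ n) / qPoch q (A * E) n : ℝ)
          : ℂ) / (qPochInfC q (A * ζ) * qPochInfC q (A * η)) *
        (askeyWilson q n A C D E x : ℂ)) := by
  have hsum := (summable_abs_alSalamChiharaCoeff_mul_pow hq hadd hmul hζ hη C D).of_abs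
  have hqC : ‖(q : ℂ)‖ < 1 := by rwa [Complex.norm_real]
  have hden : qPochInfC q (A * ζ) * qPochInfC q (A * η) ≠ 0 :=
    mul_ne_zero (qPochInfC_ne_zero hqC hζ) (qPochInfC_ne_zero hqC hη)
  have hgen : (alSalamChiharaGen q C D x A : ℂ) =
      ((qPochInf q (A * C) * qPochInf q (A * D) : ℝ) : ℂ) /
        (qPochInfC q (A * ζ) * qPochInfC q (A * η)) :=
    (eq_div_iff hden).mpr (by rw [mul_comm, qPochInfC_mul_alSalamChiharaGen hq hadd hmul hsum])
  have htransform := hasSum_littleqJacobi_mul_alSalamChihara hq hsum (A * E / q) (C * D / q) n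
  rw [sum_mul_alSalamChiharaGen_eq_askeyWilson hq0 hq hA hAC hAD hAE hsum] at htransform
  convert Complex.hasSum_ofReal.mpr htransform using 1
  rw [← qPoch_mul_qPochInf hq (A * C) n, ← qPoch_mul_qPochInf hq (A * D) n] at hgen
  push_cast at hgen ⊢
  rw [hgen]
  have hACc : (qPoch q (A * C) n : ℂ) ≠ 0 := Complex.ofReal_ne_zero.mpr hAC
  have hADc : (qPoch q (A * D) n : ℂ) ≠ 0 := Complex.ofReal_ne_zero.mpr hAD
  field_simp

end Transform

theorem norm_ofReal_mul_exp_ofReal_mul_I (r θ : ℝ) :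
    ‖(r : ℂ) * Complex.exp ((θ : ℂ) * Complex.I)‖ = |r| := by
  rw [norm_mul, Complex.norm_exp_ofReal_mul_I, mul_one, Complex.norm_real, Real.norm_eq_abs]

theorem stmt_11_general (q a b c α θ : ℝ) (n : ℕ) (hq : 0 < q) (hq1 : q < 1) (ha : 0 < a)
    (hc : c ≠ 0) (hα : α ≠ 0) (hα1 : |α| < 1 / √(a * q)) (haq : qPoch q (a * q) n ≠ 0)
    (hac : qPoch q (α * a * c * q) n ≠ 0) (hbc : qPoch q (α * b * q / c) n ≠ 0) :
    Summable (fun k : ℕ =>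
      |α ^ k * √(a * q) ^ k / qPoch q q k * littleqJacobi q a b n (q ^ k)
        * alSalamChihara q (c * √(a * q)) (b / c * √(q / a)) (Real.cos θ) k|) ∧
    ((∑' k : ℕ, α ^ k * √(a * q) ^ k / qPoch q q k * littleqJacobi q a b n (q ^ k)
        * alSalamChihara q (c * √(a * q)) (b / c * √(q / a)) (Real.cos θ) k : ℝ) : ℂ)
      = ((α ^ n * √(a * q) ^ n * qPochInf q (α * a * c * q ^ (n + 1))
            * qPochInf q (α * b * q ^ (n + 1) / c) / qPoch q (a * q) n : ℝ) : ℂ)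
          / (qPochInfC q (((α * √(a * q) : ℝ) : ℂ) * Complex.exp ((θ : ℂ) * Complex.I))
              * qPochInfC q (((α * √(a * q) : ℝ) : ℂ) * Complex.exp (-(θ : ℂ) * Complex.I)))
        * ((askeyWilson q n (α * √(a * q)) (c * √(a * q)) (b / c * √(q / a)) (√(a * q) / α)
              (Real.cos θ) : ℝ) : ℂ) := by
  have hs : 0 < √(a * q) := Real.sqrt_pos.mpr (mul_pos ha hq)
  have hss : √(a * q) * √(a * q) = a * q := Real.mul_self_sqrt (mul_pos ha hq).le
  have hst : √(a * q) * √(q / a) = q := by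
    rw [← Real.sqrt_mul (mul_pos ha hq).le, show a * q * (q / a) = q * q by field_simp,
      Real.sqrt_mul_self hq.le]
  set s := √(a * q)
  set t := √(q / a)
  have hAC : α * s * (c * s) = α * a * c * q := by linear_combination α * c * hss
  have hAD : α * s * (b / c * t) = α * b * q / c := by linear_combination α * b / c * hst
  have hAE : α * s * (s / α) = a * q := by rw [← hss]; field_simp
  have hCD : c * s * (b / c * t) = b * q := by field_simp; linear_combination b * hst
  have hadd : Complex.exp (θ * Complex.I) + Complex.exp (-θ * Complex.I) =
      2 * (Real.cos θ : ℝ) := by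
    rw [Complex.ofReal_cos, Complex.two_cos]
  have hmul : Complex.exp (θ * Complex.I) * Complex.exp (-θ * Complex.I) = 1 := by
    rw [← Complex.exp_add, neg_mul, add_neg_cancel, Complex.exp_zero]
  have hA1 : |α * s| < 1 := by rwa [abs_mul, abs_of_pos hs, ← lt_div_iff₀ hs]
  have hζ := (norm_ofReal_mul_exp_ofReal_mul_I (α * s) θ).trans_lt hA1
  have hη := (norm_ofReal_mul_exp_ofReal_mul_I (α * s) (-θ)).trans_lt hA1
  rw [Complex.ofReal_neg] at hη
  have hsum := hasSum_littleqJacobi_mul_alSalamChihara_eq_askeyWilson hq.ne'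
    (abs_lt.mpr ⟨by linarith, hq1⟩) (mul_ne_zero hα hs.ne') hadd hmul hζ hη (hAC ▸ hac) (hAD ▸ hbc)
    (hAE ▸ haq)
  rw [hAC, hAD, hAE, hCD, mul_div_cancel_right₀ _ hq.ne', mul_div_cancel_right₀ _ hq.ne'] at hsum
  simp only [mul_pow] at hsum
  refine ⟨(Complex.summable_ofReal.mp hsum.summable).abs, ?_⟩
  rw [Complex.ofReal_tsum, hsum.tsum_eq, pow_succ', ← mul_assoc, ← mul_assoc,
    mul_div_right_comm _ (q ^ n)]

/-- The spectral transform (built from Al-Salam–Chihara polynomials) of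
`q^k ↦ α^k p_n(q^k;a,b;q)` is an explicit multiple of a four-parameter Askey–Wilson
polynomial: a q-analogue of Koornwinder's formula mapping Jacobi polynomials to Wilson
polynomials under the Jacobi function transform. -/
theorem stmt_11 (q a b c α θ : ℝ) (n : ℕ) (hq : 0 < q) (hq1 : q < 1)
    (ha0 : 0 < a) (ha1 : a < q⁻¹) (hb : b < q⁻¹) (hc : c ≠ 0)
    (hθ0 : 0 < θ) (hθπ : θ < Real.pi)
    (hα1 : Real.sqrt (a * q) < α) (hα2 : α < 1 / Real.sqrt (a * q))
    (hαac : |α * a * c * q| < 1) (hαbc : |α * b * q / c| < 1)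
    (haq : ∀ k ≤ n, qPoch q (a * q) k ≠ 0)
    (hac : ∀ k ≤ n, qPoch q (α * a * c * q) k ≠ 0)
    (hbc : ∀ k ≤ n, qPoch q (α * b * q / c) k ≠ 0) :
    Summable (fun k : ℕ =>
      |α ^ k * Real.sqrt (a * q) ^ k / qPoch q q k * littleqJacobi q a b n (q ^ k)
        * alSalamChihara q (c * Real.sqrt (a * q)) (b / c * Real.sqrt (q / a))
            (Real.cos θ) k|) ∧
    ((∑' k : ℕ, α ^ k * Real.sqrt (a * q) ^ k / qPoch q q k * littleqJacobi q a b n (q ^ k)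
        * alSalamChihara q (c * Real.sqrt (a * q)) (b / c * Real.sqrt (q / a))
            (Real.cos θ) k : ℝ) : ℂ)
      = ((α ^ n * Real.sqrt (a * q) ^ n * qPochInf q (α * a * c * q ^ (n + 1))
            * qPochInf q (α * b * q ^ (n + 1) / c) / qPoch q (a * q) n : ℝ) : ℂ)
          / (qPochInfC (q : ℂ) (((α * Real.sqrt (a * q) : ℝ) : ℂ)
                * Complex.exp ((θ : ℂ) * Complex.I))
              * qPochInfC (q : ℂ) (((α * Real.sqrt (a * q) : ℝ) : ℂ)
                * Complex.exp (-(θ : ℂ) * Complex.I)))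
        * ((askeyWilson q n (α * Real.sqrt (a * q)) (c * Real.sqrt (a * q))
              (b / c * Real.sqrt (q / a)) (Real.sqrt (a * q) / α) (Real.cos θ) : ℝ) : ℂ) :=
  have hα : 0 < α := (Real.sqrt_nonneg _).trans_lt hα1
  stmt_11_general q a b c α θ n hq hq1 ha0 hc hα.ne' ((abs_of_pos hα).trans_lt hα2)
    (haq n le_rfl) (hac n le_rfl) (hbc n le_rfl)
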